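/- Let a be an object of the Weyl groupoid of a Cartan scheme with finite root system. Then all maximal chains in Hom(−, a) (the set of morphisms with target a) under the right weak order have the same length, namely |R^a_+|. -/

import Mathlib

/-!
The length of a morphism is its number of inversions, the positive roots at its source that it
makes negative. A word with target `a` never has more inversions than letters, since appending a
letter changes the number of inversions by exactly one. For the converse (`exists_reduced`) the
point is `exists_shorter`: if a word defining `w` has as many inversions as letters and `w(α_i)`
is negative, then `w σ_i` is defined by a word with one letter less. This rests on the
braid relation `eqv_alt`: the two alternating words in `i`, `j` whose length is the number of
positive roots in the span of `α_i`, `α_j` define the same morphism. Both make this whole rank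
two system negative and send the simple roots to the same negated simple roots; sign coherence of
roots extends the equality to all simple roots, and (R4) says that the sources agree.

On a chain the length is then injective with values at most `|R^a_+|`. In a maximal chain every
value from `0` to `|R^a_+|` is attained: the identity lies below everything, and above an element
`u` of non-maximal length there is an element of length `ℓ(u) + 1`, which can be taken below the
next element of the chain if there is one.
-/

set_option linter.unusedSectionVars false

/-- A Cartan scheme `C = C(I, A, (ρ_i), (C^a))`. -/
structure CartanScheme (I A : Type) [Fintype I] [DecidableEq I] [Fintype A] [Nonempty A] where
  ρ : I → A → A
  c : A → I → I → ℤ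
  ρ_invol : ∀ i a, ρ i (ρ i a) = a
  c_diag : ∀ a i, c a i i = 2
  c_offdiag_nonpos : ∀ a i j, i ≠ j → c a i j ≤ 0
  c_zero_symm : ∀ a i j, c a i j = 0 → c a j i = 0
  c_rho : ∀ a i j, c (ρ i a) i j = c a i j

namespace CartanScheme

variable {I A : Type} [Fintype I] [DecidableEq I] [Fintype A] [Nonempty A] [DecidableEq A]
variable (C : CartanScheme I A)

/-- The simple reflection `σ_i^a` as a map `ℤ^I → ℤ^I`, `σ_i^a(α_j) = α_j - c^a_{ij} α_i`. -/
def sigma (a : A) (i : I) : (I → ℤ) → (I → ℤ) :=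
  fun v k => v k - (if k = i then ∑ j, C.c a i j * v j else 0)

/-- Target object of the word `[i_1, …, i_k]` read at source object `a`:
`ρ_{i_1} ⋯ ρ_{i_k}(a)`. -/
def wordTarget (a : A) : List I → A
  | [] => a
  | i :: l => C.ρ i (wordTarget a l)

/-- The map `σ_{i_1} ⋯ σ_{i_k}^a : ℤ^I → ℤ^I` determined by a word with source `a`. -/
def wordMap (a : A) : List I → ((I → ℤ) → (I → ℤ))
  | [] => id
  | i :: l => C.sigma (C.wordTarget a l) i ∘ wordMap a l

theorem wordTarget_append (a : A) (l₁ l₂ : List I) :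
    C.wordTarget a (l₁ ++ l₂) = C.wordTarget (C.wordTarget a l₂) l₁ := by
  induction l₁ with
  | nil => rfl
  | cons i l ih => simp [wordTarget, ih]

theorem wordMap_append (a : A) (l₁ l₂ : List I) :
    C.wordMap a (l₁ ++ l₂) = C.wordMap (C.wordTarget a l₂) l₁ ∘ C.wordMap a l₂ := by
  induction l₁ with
  | nil => rfl
  | cons i l ih => simp [wordMap, ih, wordTarget_append, Function.comp_assoc]

/-- A morphism of the Weyl groupoid `W(C)`: a source object, a target object, and a map
`ℤ^I → ℤ^I` which is a composition of simple reflections along some word. -/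
@[ext]
structure Mor where
  src : A
  tgt : A
  toFun : (I → ℤ) → (I → ℤ)
  spec : ∃ l : List I, C.wordTarget src l = tgt ∧ C.wordMap src l = toFun

variable {C}

/-- A word realizes a morphism. -/
def Realizes (w : Mor C) (l : List I) : Prop :=
  C.wordTarget w.src l = w.tgt ∧ C.wordMap w.src l = w.toFun

variable (C)

/-- The identity morphism `id^a`. -/
def idMor (a : A) : Mor C := ⟨a, a, id, ⟨[], rfl, rfl⟩⟩

/-- The generator `σ_i^a ∈ Hom(a, ρ_i(a))`. -/
def genMor (i : I) (a : A) : Mor C :=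
  ⟨a, C.ρ i a, C.sigma a i, ⟨[i], rfl, Function.comp_id _⟩⟩

/-- The simple reflection with target `a`, i.e. `id^a σ_i = σ_i^{ρ_i(a)} ∈ Hom(ρ_i(a), a)`. -/
def sgen (a : A) (i : I) : Mor C :=
  { src := C.ρ i a, tgt := a, toFun := C.sigma (C.ρ i a) i,
    spec := ⟨[i], by simp [wordTarget, C.ρ_invol], Function.comp_id _⟩ }

variable {C}

/-- Composition `u ∘ v` (with `v` applied first); junk value `u` if not composable. -/
def Mor.comp (u v : Mor C) : Mor C :=
  if h : v.tgt = u.src then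
    { src := v.src, tgt := u.tgt, toFun := u.toFun ∘ v.toFun,
      spec := by
        obtain ⟨lu, hu1, hu2⟩ := u.spec
        obtain ⟨lv, hv1, hv2⟩ := v.spec
        refine ⟨lu ++ lv, ?_, ?_⟩
        · rw [C.wordTarget_append, hv1, h, hu1]
        · rw [C.wordMap_append, hv1, h, hu2, hv2] }
  else u

/-- Length of a morphism: minimal length of a realizing word. -/
noncomputable def len (w : Mor C) : ℕ := sInf {k | ∃ l : List I, Realizes w l ∧ l.length = k}

/-- A reduced decomposition. -/
def IsReduced (w : Mor C) (l : List I) : Prop := Realizes w l ∧ l.length = len w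

/-- The (right) weak order: `u ≤_R uv` iff `ℓ(uv) = ℓ(u) + ℓ(v)`. -/
def weakLe (u w : Mor C) : Prop :=
  ∃ v : Mor C, v.tgt = u.src ∧ w = u.comp v ∧ len w = len u + len v

/-- Membership in the parabolic subgroupoid `W_J(C)`. -/
def InParabolic (J : Set I) (w : Mor C) : Prop :=
  ∃ l : List I, (∀ i ∈ l, i ∈ J) ∧ Realizes w l

/-- Length with respect to the generators `σ_j`, `j ∈ J`. -/
noncomputable def lenPar (J : Set I) (w : Mor C) : ℕ :=
  sInf {k | ∃ l : List I, (∀ i ∈ l, i ∈ J) ∧ Realizes w l ∧ l.length = k}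

/-- The set of letters occurring in some reduced decomposition of `w`;
by the theorem on reduced decompositions this is the set `J(w)`. -/
def Jset (w : Mor C) : Set I := {i | ∃ l : List I, IsReduced w l ∧ i ∈ l}

variable (C)

/-- The set of real roots at the object `a`. -/
def roots (a : A) : Set (I → ℤ) :=
  {α | ∃ (b : A) (l : List I) (j : I),
    C.wordTarget b l = a ∧ α = C.wordMap b l (Pi.single j 1)}

/-- The set of positive (real) roots at `a`. -/
def posRoots (a : A) : Set (I → ℤ) := {α ∈ C.roots a | ∀ i, 0 ≤ α i}

/-- `R^re(C)` is a finite root system of type `C`: axioms (R1), (R2), (R4) and finiteness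
((R3) holds automatically for real roots). -/
def IsFRS : Prop :=
  (∀ a : A, (C.roots a).Finite) ∧
  (∀ (a : A) (α : I → ℤ), α ∈ C.roots a → (∀ i, 0 ≤ α i) ∨ (∀ i, α i ≤ 0)) ∧
  (∀ (a : A) (i : I) (α : I → ℤ), α ∈ C.roots a → (∃ z : ℤ, α = z • Pi.single i 1) →
    α = Pi.single i 1 ∨ α = -Pi.single i 1) ∧
  (∀ (a : A) (i j : I), i ≠ j →
    (fun x => C.ρ i (C.ρ j x))^[(C.roots a ∩
      {α | ∃ m n : ℕ, α = (m : ℤ) • Pi.single i 1 + (n : ℤ) • Pi.single j 1}).ncard] a = a)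

variable {C}

/-- `I_L(w)`: the set of simple reflections with target `w.tgt` below `w` in weak order. -/
def IL (w : Mor C) : Set I := {i | weakLe (sgen C w.tgt i) w}

/-- `m` is the longest element of `Hom(-,a) ∩ W_J(C)`, i.e. `w_J` at the object `a`. -/
def IsLongestPar (a : A) (J : Set I) (m : Mor C) : Prop :=
  m.tgt = a ∧ InParabolic J m ∧
    ∀ x : Mor C, x.tgt = a → InParabolic J x → weakLe x m

/-- `m` is the longest element `w_I` of `Hom(-,a)`. -/
def IsLongestAt (a : A) (m : Mor C) : Prop :=
  m.tgt = a ∧ ∀ x : Mor C, x.tgt = a → weakLe x m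

/-- `z` is the meet of `x` and `y` in `(Hom(-,a), ≤_R)`. -/
def IsMeet (a : A) (x y z : Mor C) : Prop :=
  z.tgt = a ∧ weakLe z x ∧ weakLe z y ∧
    ∀ t : Mor C, t.tgt = a → weakLe t x → weakLe t y → weakLe t z

/-- `z` is the join of `x` and `y` in `(Hom(-,a), ≤_R)`. -/
def IsJoin (a : A) (x y z : Mor C) : Prop :=
  z.tgt = a ∧ weakLe x z ∧ weakLe y z ∧
    ∀ t : Mor C, t.tgt = a → weakLe x t → weakLe y t → weakLe z t

/-- The left coset `u W_J(C) ⊆ Hom(-, u.tgt)`. -/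
def leftCoset (u : Mor C) (J : Set I) : Set (Mor C) :=
  {x | ∃ v : Mor C, InParabolic J v ∧ v.tgt = u.src ∧ x = u.comp v}

end CartanScheme

variable {I A : Type} [Fintype I] [DecidableEq I] [Fintype A] [Nonempty A] [DecidableEq A]

open CartanScheme


namespace CartanScheme

variable {C : CartanScheme I A}

/-! ### Words read from a fixed target -/

/-- The simple root `α_i`. -/
abbrev sr (i : I) : I → ℤ := Pi.single i 1

variable (C) in
/-- The source of the morphism `id^a σ_{i_1} ⋯ σ_{i_k}` with target `a`. -/
def bk (a : A) : List I → A
  | [] => a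
  | i :: l => bk (C.ρ i a) l

variable (C) in
/-- The map underlying the morphism `id^a σ_{i_1} ⋯ σ_{i_k}` with target `a`. The reflections
`σ_i^a` and `σ_i^{ρ_i(a)}` are the same map, so the first letter may be read at `a`. -/
def tm (a : A) : List I → (I → ℤ) → (I → ℤ)
  | [] => id
  | i :: l => C.sigma a i ∘ tm (C.ρ i a) l

theorem sigma_rho (a : A) (i : I) : C.sigma (C.ρ i a) i = C.sigma a i := by
  funext v k
  simp [sigma, C.c_rho]

theorem sigma_apply_ne (a : A) {i k : I} (h : k ≠ i) (v : I → ℤ) : C.sigma a i v k = v k := by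
  simp [sigma, h]

theorem sigma_sigma (a : A) (i : I) (v : I → ℤ) : C.sigma a i (C.sigma a i v) = v := by
  funext k
  by_cases h : k = i
  · subst h
    simp only [sigma, if_true, mul_sub, Finset.sum_sub_distrib, mul_ite, mul_zero,
      Finset.sum_ite_eq', Finset.mem_univ, C.c_diag]
    ring
  · simp [sigma, h]

theorem sigma_sr (a : A) (i : I) : C.sigma a i (sr i) = -sr i := by
  funext k
  by_cases h : k = i
  · subst h
    simp [sigma, C.c_diag, Pi.single_apply]
  · simp [sigma, h]

theorem sigma_linear (a : A) (i : I) : IsLinearMap ℤ (C.sigma a i) := by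
  constructor
  · intro u v
    funext k
    by_cases h : k = i
    · simp [sigma, h, mul_add, Finset.sum_add_distrib]; ring
    · simp [sigma, h]
  · intro c v
    funext k
    by_cases h : k = i
    · simp [sigma, h, mul_sub, Finset.mul_sum, mul_left_comm]
    · simp [sigma, h]

theorem bk_append (a : A) (l₁ l₂ : List I) : C.bk a (l₁ ++ l₂) = C.bk (C.bk a l₁) l₂ := by
  induction l₁ generalizing a with
  | nil => rfl
  | cons i l ih => simp [bk, ih]

theorem tm_append (a : A) (l₁ l₂ : List I) :
    C.tm a (l₁ ++ l₂) = C.tm a l₁ ∘ C.tm (C.bk a l₁) l₂ := by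
  induction l₁ generalizing a with
  | nil => rfl
  | cons i l ih => simp [tm, bk, ih, Function.comp_assoc]

theorem bk_snoc (a : A) (l : List I) (i : I) : C.bk a (l ++ [i]) = C.ρ i (C.bk a l) := by
  simp [bk_append, bk]

theorem tm_snoc (a : A) (l : List I) (i : I) (v : I → ℤ) :
    C.tm a (l ++ [i]) v = C.tm a l (C.sigma (C.bk a l) i v) := by
  simp [tm_append, tm]

theorem tm_linear (a : A) (l : List I) : IsLinearMap ℤ (C.tm a l) := by
  induction l generalizing a with
  | nil => exact ⟨fun _ _ => rfl, fun _ _ => rfl⟩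
  | cons i l ih =>
    constructor
    · intro u v
      simp [tm, (ih _).map_add, (sigma_linear _ _).map_add]
    · intro u v
      simp only [tm, Function.comp_apply, (ih _).map_smul, (sigma_linear _ _).map_smul]

theorem wordTarget_bk (a : A) (l : List I) : C.wordTarget (C.bk a l) l = a := by
  induction l generalizing a with
  | nil => rfl
  | cons i l ih => simp [bk, wordTarget, ih, C.ρ_invol]

theorem bk_wordTarget (b : A) (l : List I) : C.bk (C.wordTarget b l) l = b := by
  induction l with
  | nil => rfl
  | cons i l ih => simp [bk, wordTarget, ih, C.ρ_invol]

theorem wordMap_bk (a : A) (l : List I) : C.wordMap (C.bk a l) l = C.tm a l := by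
  induction l generalizing a with
  | nil => rfl
  | cons i l ih => simp [bk, wordMap, tm, ih, wordTarget_bk, sigma_rho]

theorem wordMap_eq_tm (b : A) (l : List I) : C.wordMap b l = C.tm (C.wordTarget b l) l := by
  rw [← wordMap_bk, bk_wordTarget]

variable (C) in
/-- Two words with target `a` define the same morphism. -/
def Eqv (a : A) (l l' : List I) : Prop := C.bk a l = C.bk a l' ∧ C.tm a l = C.tm a l'

theorem Eqv.symm {a : A} {l l' : List I} (h : C.Eqv a l l') : C.Eqv a l' l :=
  ⟨h.1.symm, h.2.symm⟩

theorem Eqv.trans {a : A} {l l' l'' : List I} (h : C.Eqv a l l') (h' : C.Eqv a l' l'') :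
    C.Eqv a l l'' := ⟨h.1.trans h'.1, h.2.trans h'.2⟩

theorem Eqv.append {a : A} {l l' : List I} (h : C.Eqv a l l') (x : List I) :
    C.Eqv a (l ++ x) (l' ++ x) := by
  simp only [Eqv, bk_append, tm_append, h.1, h.2, and_self]

theorem Eqv.prepend {a : A} {x l l' : List I} (h : C.Eqv (C.bk a x) l l') :
    C.Eqv a (x ++ l) (x ++ l') := by
  simp only [Eqv, bk_append, tm_append, h.1, h.2, and_self]

theorem eqv_reverse_right (a : A) (l : List I) : C.Eqv a (l ++ l.reverse) [] := by
  induction l generalizing a with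
  | nil => exact ⟨rfl, rfl⟩
  | cons i l ih =>
    have h := ih (C.ρ i a)
    have e : i :: l ++ (i :: l).reverse = i :: ((l ++ l.reverse) ++ [i]) := by simp
    have hb : C.bk (C.ρ i a) (l ++ l.reverse) = C.ρ i a := h.1
    have ht : C.tm (C.ρ i a) (l ++ l.reverse) = id := h.2
    rw [e]
    refine ⟨?_, ?_⟩
    · simp only [bk]
      rw [bk_snoc, hb, C.ρ_invol]
    · funext v
      simp only [tm, Function.comp_apply, id]
      rw [tm_snoc, hb, ht, sigma_rho]
      exact sigma_sigma _ _ _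

theorem eqv_cancel (a : A) (l x : List I) : C.Eqv a (l ++ x ++ x.reverse) l := by
  have := (eqv_reverse_right (C.bk a l) x).prepend (x := l)
  simpa using this

theorem bk_reverse (a : A) (l : List I) : C.bk (C.bk a l) l.reverse = a := by
  rw [← bk_append]; exact (eqv_reverse_right a l).1

theorem tm_tm_reverse (a : A) (l : List I) (v : I → ℤ) :
    C.tm a l (C.tm (C.bk a l) l.reverse v) = v := by
  have := (eqv_reverse_right (C := C) a l).2
  rw [tm_append] at this
  exact congrFun this v

theorem tm_reverse_tm (a : A) (l : List I) (v : I → ℤ) :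
    C.tm (C.bk a l) l.reverse (C.tm a l v) = v := by
  have := tm_tm_reverse (C := C) (C.bk a l) l.reverse v
  rwa [bk_reverse, List.reverse_reverse] at this

theorem tm_apply_of_notMem {J : Set I} {l : List I} (hl : ∀ i ∈ l, i ∈ J) (a : A) {k : I}
    (hk : k ∉ J) (v : I → ℤ) : C.tm a l v k = v k := by
  induction l generalizing a with
  | nil => rfl
  | cons i l ih =>
    simp only [tm, Function.comp_apply]
    rw [sigma_apply_ne, ih (fun j hj => hl j (by simp [hj]))]
    rintro rfl
    exact hk (hl k (by simp))

/-! ### Roots and inversions -/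

theorem mem_roots_iff {a : A} {α : I → ℤ} :
    α ∈ C.roots a ↔ ∃ (l : List I) (j : I), α = C.tm a l (sr j) := by
  constructor
  · rintro ⟨b, l, j, rfl, rfl⟩
    exact ⟨l, j, by rw [wordMap_eq_tm]⟩
  · rintro ⟨l, j, rfl⟩
    exact ⟨C.bk a l, l, j, wordTarget_bk a l, by rw [wordMap_bk]⟩

theorem sr_mem_roots (a : A) (i : I) : sr i ∈ C.roots a := mem_roots_iff.2 ⟨[], i, rfl⟩

theorem tm_mem_roots {a : A} {l : List I} {α : I → ℤ} (h : α ∈ C.roots (C.bk a l)) :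
    C.tm a l α ∈ C.roots a := by
  obtain ⟨l', j, rfl⟩ := mem_roots_iff.1 h
  exact mem_roots_iff.2 ⟨l ++ l', j, by simp [tm_append]⟩

theorem tm_reverse_mem_roots {a : A} {l : List I} {α : I → ℤ} (h : α ∈ C.roots a) :
    C.tm (C.bk a l) l.reverse α ∈ C.roots (C.bk a l) := by
  apply tm_mem_roots
  rwa [bk_reverse]

theorem sigma_mem_roots {a : A} {i : I} {α : I → ℤ} (h : α ∈ C.roots a) :
    C.sigma a i α ∈ C.roots (C.ρ i a) := by
  have := tm_mem_roots (C := C) (a := C.ρ i a) (l := [i]) (α := α) (by simpa [bk, C.ρ_invol] using h)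
  simpa [tm, sigma_rho] using this

theorem root_ne_zero {a : A} {α : I → ℤ} (h : α ∈ C.roots a) : α ≠ 0 := by
  obtain ⟨l, j, rfl⟩ := mem_roots_iff.1 h
  intro h0
  have := tm_reverse_tm (C := C) a l (sr j)
  rw [h0, (tm_linear _ _).map_zero] at this
  have := congrFun this j
  simp at this

theorem root_pos_or_neg (hC : C.IsFRS) {a : A} {α : I → ℤ} (h : α ∈ C.roots a) :
    0 ≤ α ∨ α ≤ 0 := hC.2.1 a α h

theorem not_nonpos_of_nonneg {a : A} {α : I → ℤ} (h : α ∈ C.roots a) (h0 : 0 ≤ α) : ¬ α ≤ 0 :=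
  fun h1 => root_ne_zero h (le_antisymm h1 h0)

theorem nonneg_of_coord (hC : C.IsFRS) {a : A} {α : I → ℤ} (h : α ∈ C.roots a) {k : I}
    (hk : 0 < α k) : 0 ≤ α :=
  (root_pos_or_neg hC h).resolve_right fun h1 => absurd (h1 k) (by simpa using hk)

theorem sr_nonneg (i : I) : (0 : I → ℤ) ≤ sr i := by
  intro k
  by_cases h : k = i
  · subst h; simp
  · simp [h]

/-- A simple reflection `σ_i` keeps every positive root other than `α_i` positive. -/
theorem sigma_nonneg (hC : C.IsFRS) {a : A} {i : I} {α : I → ℤ} (h : α ∈ C.roots a)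
    (h0 : 0 ≤ α) (hne : α ≠ sr i) : 0 ≤ C.sigma a i α := by
  by_cases hk : ∃ k, k ≠ i ∧ α k ≠ 0
  · obtain ⟨k, hki, hk⟩ := hk
    refine nonneg_of_coord hC (sigma_mem_roots h) (k := k) ?_
    rw [sigma_apply_ne _ hki]
    exact lt_of_le_of_ne (h0 k) (Ne.symm hk)
  · push Not at hk
    exfalso
    have hz : α = α i • sr i := by
      funext k
      by_cases hki : k = i
      · subst hki; simp
      · simp [hki, hk k hki]
    rcases hC.2.2.1 a i α h ⟨_, hz⟩ with h1 | h1
    · exact hne h1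
    · have := h0 i
      rw [h1] at this
      simp at this

variable (C) in
/-- The positive roots at `a` supported on `J`. -/
def posJ (J : Set I) (a : A) : Set (I → ℤ) := {α ∈ C.roots a | 0 ≤ α ∧ ∀ k, k ∉ J → α k = 0}

variable (C) in
/-- The inversions supported on `J` of the morphism `id^a σ_{i_1} ⋯ σ_{i_k}`: the positive roots
at its source, supported on `J`, that it makes negative. -/
def inv (J : Set I) (a : A) (l : List I) : Set (I → ℤ) :=
  {α ∈ C.posJ J (C.bk a l) | C.tm a l α ≤ 0}

theorem posJ_finite (hC : C.IsFRS) (J : Set I) (a : A) : (C.posJ J a).Finite :=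
  (hC.1 a).subset fun _ h => h.1

theorem inv_subset (J : Set I) (a : A) (l : List I) : C.inv J a l ⊆ C.posJ J (C.bk a l) :=
  fun _ h => h.1

theorem inv_finite (hC : C.IsFRS) (J : Set I) (a : A) (l : List I) : (C.inv J a l).Finite :=
  (posJ_finite hC J _).subset (inv_subset J a l)

theorem posJ_univ (a : A) : C.posJ Set.univ a = C.posRoots a := by
  ext α
  simp [posJ, posRoots, Pi.le_def]

theorem sr_mem_posJ {J : Set I} {i : I} (hi : i ∈ J) (a : A) : sr i ∈ C.posJ J a := by
  refine ⟨sr_mem_roots a i, sr_nonneg i, fun k hk => ?_⟩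
  have : k ≠ i := by rintro rfl; exact hk hi
  simp [this]

theorem sigma_mem_posJ (hC : C.IsFRS) {J : Set I} {i : I} (hi : i ∈ J) {a : A} {α : I → ℤ}
    (h : α ∈ C.posJ J a) (hne : α ≠ sr i) : C.sigma a i α ∈ C.posJ J (C.ρ i a) \ {sr i} := by
  refine ⟨⟨sigma_mem_roots h.1, sigma_nonneg hC h.1 h.2.1 hne, fun k hk => ?_⟩, fun he => ?_⟩
  · rw [sigma_apply_ne, h.2.2 k hk]
    rintro rfl; exact hk hi
  · have he : C.sigma a i α = sr i := he
    have := sigma_sigma (C := C) a i α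
    rw [he, sigma_sr] at this
    have h2 := h.2.1 i
    rw [← this] at h2
    simp at h2

theorem sigma_injective (a : A) (i : I) : Function.Injective (C.sigma a i) :=
  Function.LeftInverse.injective (sigma_sigma a i)

theorem sigma_image_posJ (hC : C.IsFRS) {J : Set I} {i : I} (hi : i ∈ J) (a : A) :
    C.sigma a i '' (C.posJ J a \ {sr i}) = C.posJ J (C.ρ i a) \ {sr i} := by
  ext β
  constructor
  · rintro ⟨α, ⟨h1, h2⟩, rfl⟩
    exact sigma_mem_posJ hC hi h1 h2
  · rintro ⟨h1, h2⟩
    refine ⟨C.sigma a i β, ?_, sigma_sigma a i β⟩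
    have := sigma_mem_posJ hC hi h1 h2
    rwa [sigma_rho, C.ρ_invol] at this

theorem ncard_posJ_rho (hC : C.IsFRS) {J : Set I} {i : I} (hi : i ∈ J) (a : A) :
    (C.posJ J (C.ρ i a)).ncard = (C.posJ J a).ncard := by
  rw [← Set.ncard_sdiff_singleton_add_one (sr_mem_posJ hi a) (posJ_finite hC J a),
    ← Set.ncard_sdiff_singleton_add_one (sr_mem_posJ hi (C.ρ i a)) (posJ_finite hC J _),
    ← sigma_image_posJ hC hi, Set.ncard_image_of_injective _ (sigma_injective a i)]

theorem ncard_posJ_bk (hC : C.IsFRS) {J : Set I} {l : List I} (hl : ∀ i ∈ l, i ∈ J) (a : A) :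
    (C.posJ J (C.bk a l)).ncard = (C.posJ J a).ncard := by
  induction l generalizing a with
  | nil => rfl
  | cons i l ih =>
    rw [bk, ih (fun j hj => hl j (by simp [hj])), ncard_posJ_rho hC (hl i (by simp))]

/-- Apart from `α_i` itself, `σ_i` matches the inversions of `wσ_i` with those of `w`. -/
theorem sigma_image_inv (hC : C.IsFRS) {J : Set I} {i : I} (hi : i ∈ J) (a : A) (l : List I) :
    C.sigma (C.bk a l) i '' (C.inv J a l \ {sr i}) = C.inv J a (l ++ [i]) \ {sr i} := by
  ext β
  constructor
  · rintro ⟨α, ⟨⟨h1, h3⟩, h2⟩, rfl⟩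
    have := sigma_mem_posJ hC hi h1 h2
    refine ⟨⟨?_, ?_⟩, this.2⟩
    · rw [bk_snoc]; exact this.1
    · rwa [tm_snoc, sigma_sigma]
  · rintro ⟨⟨h1, h3⟩, h2⟩
    rw [bk_snoc] at h1
    rw [tm_snoc] at h3
    have := sigma_mem_posJ hC hi h1 h2
    rw [sigma_rho, C.ρ_invol] at this
    exact ⟨_, ⟨⟨this.1, h3⟩, this.2⟩, sigma_sigma _ _ _⟩

theorem tm_snoc_sr (a : A) (l : List I) (i : I) :
    C.tm a (l ++ [i]) (sr i) = -C.tm a l (sr i) := by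
  rw [tm_snoc, sigma_sr, (tm_linear _ _).map_neg]

theorem ncard_inv_snoc_of_nonneg (hC : C.IsFRS) {J : Set I} {i : I} (hi : i ∈ J) {a : A}
    {l : List I} (h : 0 ≤ C.tm a l (sr i)) :
    (C.inv J a (l ++ [i])).ncard = (C.inv J a l).ncard + 1 := by
  have h1 : sr i ∈ C.inv J a (l ++ [i]) :=
    ⟨sr_mem_posJ hi _, by rw [tm_snoc_sr]; exact neg_nonpos.2 h⟩
  have h2 : sr i ∉ C.inv J a l := fun h' =>
    not_nonpos_of_nonneg (tm_mem_roots (sr_mem_roots _ i)) h h'.2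
  rw [← Set.ncard_sdiff_singleton_add_one h1 (inv_finite hC J a _), ← sigma_image_inv hC hi,
    Set.ncard_image_of_injective _ (sigma_injective _ i), Set.sdiff_singleton_eq_self h2]

theorem ncard_inv_snoc_of_nonpos (hC : C.IsFRS) {J : Set I} {i : I} (hi : i ∈ J) {a : A}
    {l : List I} (h : C.tm a l (sr i) ≤ 0) :
    (C.inv J a l).ncard = (C.inv J a (l ++ [i])).ncard + 1 := by
  have h1 : sr i ∈ C.inv J a l := ⟨sr_mem_posJ hi _, h⟩
  have h2 : sr i ∉ C.inv J a (l ++ [i]) := fun h' => by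
    have h3 := h'.2
    rw [tm_snoc_sr] at h3
    exact not_nonpos_of_nonneg (tm_mem_roots (sr_mem_roots _ i)) (neg_nonpos.1 h3) h
  rw [← Set.ncard_sdiff_singleton_add_one h1 (inv_finite hC J a _),
    ← Set.ncard_image_of_injective _ (sigma_injective (C := C) (C.bk a l) i),
    sigma_image_inv hC hi, Set.sdiff_singleton_eq_self h2]

theorem inv_nil (J : Set I) (a : A) : C.inv J a [] = ∅ := by
  ext α
  simp only [Set.mem_empty_iff_false, iff_false]
  exact fun h => not_nonpos_of_nonneg h.1.1 h.1.2.1 h.2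

theorem inv_congr {J : Set I} {a : A} {l l' : List I} (h : C.Eqv a l l') :
    C.inv J a l = C.inv J a l' := by
  simp only [inv, h.1, h.2]

theorem tm_eq_sum (a : A) (l : List I) (v : I → ℤ) :
    C.tm a l v = ∑ k, v k • C.tm a l (sr k) := by
  have h := map_sum ((tm_linear (C := C) a l).mk' _) (fun k => v k • sr k) Finset.univ
  simp only [IsLinearMap.mk'_apply, (tm_linear (C := C) a l).map_smul] at h
  rw [← h]
  congr 1
  funext k
  simp [Finset.sum_apply, Pi.single_apply]

/-- If `w` makes all simple roots in `J` negative, then also all positive roots in their span. -/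
theorem tm_nonpos {J : Set I} {a : A} {l : List I} (hJ : ∀ k ∈ J, C.tm a l (sr k) ≤ 0)
    {v : I → ℤ} (h0 : 0 ≤ v) (hv : ∀ k, k ∉ J → v k = 0) : C.tm a l v ≤ 0 := by
  rw [tm_eq_sum]
  refine Finset.sum_nonpos fun k _ => ?_
  by_cases hk : k ∈ J
  · intro x
    have h1 := hJ k hk x
    have h2 := h0 k
    simp only [Pi.smul_apply, smul_eq_mul, Pi.zero_apply] at *
    exact mul_nonpos_of_nonneg_of_nonpos h2 h1
  · simp [hv k hk]

theorem inv_eq_posJ {J : Set I} {a : A} {l : List I} (hJ : ∀ k ∈ J, C.tm a l (sr k) ≤ 0) :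
    C.inv J a l = C.posJ J (C.bk a l) :=
  Set.Subset.antisymm (inv_subset J a l) fun _ h => ⟨h, tm_nonpos hJ h.2.1 h.2.2⟩

/-! ### Rank two -/

/-- The alternating word `[i, j, i, …]` of length `n`. -/
def alt (i j : I) : ℕ → List I
  | 0 => []
  | n + 1 => i :: alt j i n

/-- The letter at position `n`, counted from `0`, of the sequence `i, j, i, …`. -/
def altLetter (i j : I) : ℕ → I
  | 0 => i
  | n + 1 => altLetter j i n

theorem alt_succ (i j : I) (n : ℕ) : alt i j (n + 1) = alt i j n ++ [altLetter i j n] := by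
  induction n generalizing i j with
  | zero => rfl
  | succ n ih => rw [alt, ih, alt, altLetter]; rfl

theorem altLetter_cases (i j : I) (n : ℕ) :
    (altLetter i j n = i ∧ altLetter j i n = j) ∨ (altLetter i j n = j ∧ altLetter j i n = i) := by
  induction n generalizing i j with
  | zero => exact Or.inl ⟨rfl, rfl⟩
  | succ n ih =>
    simp only [altLetter]
    have := ih i j
    tauto

theorem altLetter_eq_ite (i j : I) (n : ℕ) : altLetter i j n = if Even n then i else j := by
  induction n generalizing i j with
  | zero => simp [altLetter]
  | succ n ih =>
    rw [altLetter, ih]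
    by_cases h : Even n <;> simp [h, Nat.even_add_one]

theorem altLetter_mem (i j : I) (n : ℕ) : altLetter i j n ∈ ({i, j} : Set I) := by
  rcases altLetter_cases i j n with h | h <;> simp [h.1]

theorem alt_mem (i j : I) (n : ℕ) : ∀ k ∈ alt i j n, k ∈ ({i, j} : Set I) := by
  induction n generalizing i j with
  | zero => simp [alt]
  | succ n ih =>
    intro k hk
    rw [alt_succ, List.mem_append] at hk
    rcases hk with hk | hk
    · induction n generalizing i j with
      | zero => simp [alt] at hk
      | succ n _ => exact ih i j k hk
    · rw [List.mem_singleton.1 hk]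
      exact altLetter_mem i j n

theorem alt_length (i j : I) (n : ℕ) : (alt i j n).length = n := by
  induction n generalizing i j with
  | zero => rfl
  | succ n ih => simp [alt, ih]

variable (C) in
/-- The number of positive roots at `a` in the span of `α_i` and `α_j`. -/
noncomputable def rk (i j : I) (a : A) : ℕ := (C.posJ {i, j} a).ncard

theorem rk_comm (i j : I) (a : A) : C.rk i j a = C.rk j i a := by
  rw [rk, rk, Set.pair_comm]

theorem rk_pos (hC : C.IsFRS) (i j : I) (a : A) : 0 < C.rk i j a := by
  rw [rk, Set.ncard_pos (posJ_finite hC _ _)]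
  exact ⟨sr i, sr_mem_posJ (by simp) a⟩

theorem alt_nonneg_aux (hC : C.IsFRS) {i j : I} {a : A} {t : ℕ} (ht : t < C.rk i j a)
    (h1 : (C.inv {i, j} a (alt i j t)).ncard = t)
    (h2 : ∀ s, t = s + 1 → C.tm a (alt i j t) (sr (altLetter i j s)) ≤ 0) :
    0 ≤ C.tm a (alt i j t) (sr (altLetter i j t)) := by
  by_contra hneg
  have hneg := (root_pos_or_neg hC
    (tm_mem_roots (sr_mem_roots (C.bk a (alt i j t)) (altLetter i j t)))).resolve_left hneg
  cases t with
  | zero => exact not_nonpos_of_nonneg (sr_mem_roots (C := C) a i) (sr_nonneg i) hneg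
  | succ s =>
    have h3 := h2 s rfl
    rw [inv_eq_posJ, ncard_posJ_bk hC (alt_mem i j _)] at h1
    · rw [rk] at ht; omega
    · simp only [altLetter] at hneg
      rcases altLetter_cases i j s with h | h <;> rw [h.1] at h3 <;> rw [h.2] at hneg <;>
        rintro k (rfl | rfl) <;> assumption

theorem alt_inv (hC : C.IsFRS) {i j : I} {a : A} {t : ℕ} (ht : t ≤ C.rk i j a) :
    (C.inv {i, j} a (alt i j t)).ncard = t ∧
      ∀ s, t = s + 1 → C.tm a (alt i j t) (sr (altLetter i j s)) ≤ 0 := by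
  induction t with
  | zero => exact ⟨by simp [alt, inv_nil], by omega⟩
  | succ t ih =>
    obtain ⟨h1, h2⟩ := ih (by omega)
    have h3 := alt_nonneg_aux hC (by omega) h1 h2
    refine ⟨?_, ?_⟩
    · rw [alt_succ, ncard_inv_snoc_of_nonneg hC (altLetter_mem i j t) h3, h1]
    · intro s hs
      obtain rfl : t = s := by omega
      rw [alt_succ, tm_snoc_sr]
      exact neg_nonpos.2 h3

/-- Until its length reaches the number of positive roots in the rank two span, an alternating
word keeps the simple root of its next letter positive. -/
theorem alt_nonneg (hC : C.IsFRS) {i j : I} {a : A} {t : ℕ} (ht : t < C.rk i j a) :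
    0 ≤ C.tm a (alt i j t) (sr (altLetter i j t)) := by
  obtain ⟨h1, h2⟩ := alt_inv hC ht.le
  exact alt_nonneg_aux hC ht h1 h2

/-- The longest alternating word has as many inversions as there are positive roots in the rank
two span, so it makes both simple roots negative. -/
theorem alt_rk_nonpos (hC : C.IsFRS) (i j : I) (a : A) {k : I} (hk : k ∈ ({i, j} : Set I)) :
    C.tm a (alt i j (C.rk i j a)) (sr k) ≤ 0 := by
  have h1 := (alt_inv hC (le_refl (C.rk i j a))).1
  have h2 : C.inv {i, j} a (alt i j (C.rk i j a)) = C.posJ {i, j} (C.bk a (alt i j (C.rk i j a))) := by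
    refine Set.eq_of_subset_of_ncard_le (inv_subset _ _ _) ?_ (posJ_finite hC _ _)
    rw [h1, ncard_posJ_bk hC (alt_mem i j _), rk]
  have h3 : sr k ∈ C.inv {i, j} a (alt i j (C.rk i j a)) := by
    rw [h2]; exact sr_mem_posJ hk _
  exact h3.2

/-- The next letter of the longest alternating word: its simple root goes to `-α_i`, because
`α_i` is the only positive root that the first letter `σ_i` makes negative. -/
theorem alt_rk_first (hC : C.IsFRS) (i j : I) (a : A) :
    C.tm a (alt i j (C.rk i j a)) (sr (altLetter i j (C.rk i j a))) = -sr i := by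
  have hneg := alt_rk_nonpos hC i j a (altLetter_mem i j (C.rk i j a))
  obtain ⟨n, hn⟩ := Nat.exists_eq_succ_of_ne_zero (rk_pos hC i j a).ne'
  have hr : C.rk j i (C.ρ i a) = n + 1 := by
    rw [rk_comm, rk, ncard_posJ_rho hC (by simp)]; exact hn
  have h1 := alt_nonneg hC (show n < C.rk j i (C.ρ i a) by omega)
  rw [hn] at hneg ⊢
  simp only [alt, altLetter, tm, Function.comp_apply] at hneg ⊢
  have hroot : C.tm (C.ρ i a) (alt j i n) (sr (altLetter j i n)) ∈ C.roots (C.ρ i a) :=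
    tm_mem_roots (sr_mem_roots _ _)
  have h2 : C.tm (C.ρ i a) (alt j i n) (sr (altLetter j i n)) = sr i := by
    by_contra hne
    have h3 := sigma_nonneg hC hroot h1 hne
    rw [sigma_rho] at h3
    have h4 := sigma_mem_roots hroot (i := i)
    rw [sigma_rho] at h4
    exact not_nonpos_of_nonneg h4 h3 hneg
  rw [h2, sigma_sr]

theorem tm_pair {x y : I} (hxy : x ≠ y) {v : I → ℤ} (hv : ∀ k, k ∉ ({x, y} : Set I) → v k = 0)
    (a : A) (l : List I) :
    C.tm a l v = v x • C.tm a l (sr x) + v y • C.tm a l (sr y) := by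
  rw [tm_eq_sum, Finset.sum_eq_add x y hxy]
  · intro k _ hk
    rw [hv k (by simpa using hk), zero_smul]
  · simp
  · simp

/-- The other simple root goes to `-α_j`: the preimage of `α_j` is negative, and writing it in the
two simple roots leaves no other possibility. -/
theorem alt_rk_second (hC : C.IsFRS) {i j : I} (hij : i ≠ j) (a : A) :
    C.tm a (alt i j (C.rk i j a)) (sr (altLetter j i (C.rk i j a))) = -sr j := by
  have hC1 := alt_rk_first hC i j a
  have hneg : ∀ k ∈ ({i, j} : Set I), _ := fun k hk => alt_rk_nonpos hC i j a hk
  set l := alt i j (C.rk i j a) with hl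
  have hmem : ∀ k ∈ l, k ∈ ({i, j} : Set I) := alt_mem i j _
  have hxy := altLetter_cases i j (C.rk i j a)
  set x := altLetter i j (C.rk i j a)
  set y := altLetter j i (C.rk i j a)
  have hset : ({i, j} : Set I) = {x, y} := by
    rcases hxy with ⟨h1, h2⟩ | ⟨h1, h2⟩ <;> rw [h1, h2]
    exact Set.pair_comm _ _
  have hne : x ≠ y := by
    rcases hxy with ⟨h1, h2⟩ | ⟨h1, h2⟩ <;> rw [h1, h2]
    exacts [hij, hij.symm]
  -- `α_j` is the image of a root `δ = p α_x + q α_y`, which has to be negative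
  set δ := C.tm (C.bk a l) l.reverse (sr j) with hδ
  have hτδ : C.tm a l δ = sr j := tm_tm_reverse a l _
  have hδr : δ ∈ C.roots (C.bk a l) := tm_reverse_mem_roots (sr_mem_roots a j)
  have hsupp : ∀ k, k ∉ ({i, j} : Set I) → δ k = 0 := by
    intro k hk
    rw [hδ, tm_apply_of_notMem (fun m hm => hmem m (by simpa using hm)) _ hk]
    have : k ≠ j := by rintro rfl; simp at hk
    simp [this]
  have hδ0 : δ ≤ 0 := by
    refine (root_pos_or_neg hC hδr).resolve_left fun h => ?_
    have := tm_nonpos hneg h hsupp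
    rw [hτδ] at this
    exact not_nonpos_of_nonneg (sr_mem_roots (C := C) a j) (sr_nonneg j) this
  have hpair := tm_pair (C := C) hne (v := δ) (by rwa [hset] at hsupp) a l
  rw [hτδ, hC1] at hpair
  have hy : C.tm a l (sr y) ≤ 0 := hneg y (by rw [hset]; simp)
  set η := C.tm a l (sr y)
  have ei := congrFun hpair i
  have ej := congrFun hpair j
  simp [hij, hij.symm] at ei ej
  have hp := hδ0 x
  have hq := hδ0 y
  have hηi := hy i
  have hηj := hy j
  simp only [Pi.zero_apply] at hp hq hηi hηj
  have hp0 : δ x = 0 := by nlinarith [mul_nonneg_of_nonpos_of_nonpos hq hηi]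
  have hq1 : δ y = -1 := by
    rcases Int.eq_one_or_neg_one_of_mul_eq_one ej.symm with h | h
    · omega
    · exact h
  rw [hp0, hq1] at hpair
  rw [hpair]
  simp

theorem bk_alt_even (i j : I) (n : ℕ) (a : A) :
    C.bk a (alt j i (2 * n)) = (fun x => C.ρ i (C.ρ j x))^[n] a := by
  induction n generalizing a with
  | zero => rfl
  | succ n ih =>
    rw [Function.iterate_succ_apply, ← ih]
    rfl

/-- If an alternating loop of length `2m` closes up, going `t` steps along it is the same as going
`2m - t` steps in the other direction. -/
theorem bk_alt_symm {i j : I} {m : ℕ} {a : A} (h : C.bk a (alt j i (2 * m)) = a) (t u : ℕ)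
    (htu : t + u = 2 * m) : C.bk a (alt i j t) = C.bk a (alt j i u) := by
  induction t generalizing u with
  | zero =>
    obtain rfl : u = 2 * m := by omega
    rw [h]; rfl
  | succ t ih =>
    rw [alt_succ, bk_snoc, ih (u + 1) (by omega), alt_succ, bk_snoc]
    have : altLetter i j t = altLetter j i u := by
      rw [altLetter_eq_ite, altLetter_eq_ite]
      have : Even t ↔ ¬ Even u := by
        have h1 : Even (t + u + 1) := ⟨m, by omega⟩
        simp only [Nat.even_add_one, Nat.even_add] at h1
        tauto
      by_cases hu : Even u <;> simp [hu, this]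
    rw [this, C.ρ_invol]

theorem rk_eq (i j : I) (hij : i ≠ j) (a : A) : C.rk i j a = (C.roots a ∩
    {α | ∃ m n : ℕ, α = (m : ℤ) • Pi.single i 1 + (n : ℤ) • Pi.single j 1}).ncard := by
  rw [rk]
  congr 1
  ext α
  simp only [posJ, Set.mem_inter_iff, Set.mem_ofPred_eq]
  refine and_congr_right fun _ => ?_
  constructor
  · rintro ⟨h0, h1⟩
    refine ⟨(α i).toNat, (α j).toNat, ?_⟩
    rw [Int.toNat_of_nonneg (h0 i), Int.toNat_of_nonneg (h0 j)]
    funext k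
    by_cases hi : k = i
    · subst hi; simp [hij]
    · by_cases hj : k = j
      · subst hj; simp [hi]
      · simp [hi, hj, h1 k (by simp [hi, hj])]
  · rintro ⟨m, n, rfl⟩
    refine ⟨?_, fun k hk => ?_⟩
    · exact add_nonneg (smul_nonneg (by simp) (sr_nonneg i)) (smul_nonneg (by simp) (sr_nonneg j))
    · simp only [Set.mem_insert_iff, Set.mem_singleton_iff, not_or] at hk
      simp [hk.1, hk.2]

/-- The braid relation: the two alternating words of length `rk` define the same morphism. The
sources agree by (R4); the maps agree on `α_i`, `α_j` by the explicit values, and on the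
remaining simple roots by sign coherence. -/
theorem eqv_alt (hC : C.IsFRS) {i j : I} (hij : i ≠ j) (a : A) :
    C.Eqv a (alt i j (C.rk i j a)) (alt j i (C.rk i j a)) := by
  have hbk : C.bk a (alt i j (C.rk i j a)) = C.bk a (alt j i (C.rk i j a)) := by
    refine bk_alt_symm ?_ _ _ (two_mul _).symm
    rw [bk_alt_even, rk_eq i j hij]
    exact hC.2.2.2 a i j hij
  refine ⟨hbk, ?_⟩
  have h1 := alt_rk_first hC i j a
  have h2 := alt_rk_second hC hij a
  have h1' := alt_rk_first hC j i a
  have h2' := alt_rk_second hC hij.symm a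
  rw [rk_comm j i] at h1' h2'
  have hxy := altLetter_cases i j (C.rk i j a)
  set x := altLetter i j (C.rk i j a)
  set y := altLetter j i (C.rk i j a)
  have hl : ∀ k ∈ alt i j (C.rk i j a), k ∈ ({i, j} : Set I) := alt_mem i j _
  have hl' : ∀ k ∈ alt j i (C.rk i j a), k ∈ ({i, j} : Set I) := by
    rw [Set.pair_comm]; exact alt_mem j i _
  set l := alt i j (C.rk i j a)
  set l' := alt j i (C.rk i j a)
  have hset : ({i, j} : Set I) = {x, y} := by
    rcases hxy with ⟨h1, h2⟩ | ⟨h1, h2⟩ <;> rw [h1, h2]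
    exact Set.pair_comm _ _
  have hne : x ≠ y := by
    rcases hxy with ⟨h1, h2⟩ | ⟨h1, h2⟩ <;> rw [h1, h2]
    exacts [hij, hij.symm]
  have hspan : ∀ v : I → ℤ, (∀ k, k ∉ ({i, j} : Set I) → v k = 0) → C.tm a l v = C.tm a l' v := by
    intro v hv
    rw [hset] at hv
    rw [tm_pair hne hv, tm_pair hne hv, h1, h2, h1', h2']
  have hrev : ∀ {l : List I}, (∀ k ∈ l, k ∈ ({i, j} : Set I)) →
      ∀ k ∈ l.reverse, k ∈ ({i, j} : Set I) := fun h k hk => h k (by simpa using hk)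
  have key : ∀ k, C.tm a l (sr k) = C.tm a l' (sr k) := by
    intro k
    by_cases hk : k ∈ ({i, j} : Set I)
    · refine hspan _ fun m hm => ?_
      have : m ≠ k := by rintro rfl; exact hm hk
      simp [this]
    -- `f = α_k + x` and `g = α_k - x` are roots, with `x` in the span of `α_i`, `α_j`
    set f := C.tm (C.bk a l) l.reverse (C.tm a l' (sr k)) with hf
    set g := C.tm (C.bk a l') l'.reverse (C.tm a l (sr k)) with hg
    have hfl : C.tm a l f = C.tm a l' (sr k) := tm_tm_reverse a l _
    have hgl : C.tm a l' g = C.tm a l (sr k) := tm_tm_reverse a l' _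
    have hfk : ∀ m, m ∉ ({i, j} : Set I) → f m = sr k m := fun m hm => by
      rw [hf, tm_apply_of_notMem (hrev hl) _ hm, tm_apply_of_notMem hl' _ hm]
    have hgk : ∀ m, m ∉ ({i, j} : Set I) → g m = sr k m := fun m hm => by
      rw [hg, tm_apply_of_notMem (hrev hl') _ hm, tm_apply_of_notMem hl _ hm]
    have hfr : f ∈ C.roots (C.bk a l) :=
      tm_reverse_mem_roots (tm_mem_roots (sr_mem_roots _ k))
    have hgr : g ∈ C.roots (C.bk a l') :=
      tm_reverse_mem_roots (tm_mem_roots (sr_mem_roots _ k))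
    have hf0 : 0 ≤ f := nonneg_of_coord hC hfr (k := k) (by rw [hfk k hk]; simp)
    have hg0 : 0 ≤ g := nonneg_of_coord hC hgr (k := k) (by rw [hgk k hk]; simp)
    have hx : ∀ m, m ∉ ({i, j} : Set I) → (f - sr k) m = 0 := fun m hm => by
      rw [Pi.sub_apply, hfk m hm, sub_self]
    have hgf : g - sr k = -(f - sr k) := by
      have e : C.tm a l' (g - sr k) = C.tm a l' (-(f - sr k)) := by
        rw [(tm_linear _ _).map_neg, ← hspan _ hx, (tm_linear _ _).map_sub,
          (tm_linear _ _).map_sub, hfl, hgl, neg_sub]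
      have := congrArg (C.tm (C.bk a l') l'.reverse) e
      rwa [tm_reverse_tm, tm_reverse_tm] at this
    have hfe : f = sr k := by
      funext m
      by_cases hm : m ∈ ({i, j} : Set I)
      · have hmk : m ≠ k := by rintro rfl; exact hk hm
        have e := congrFun hgf m
        have e1 := hf0 m
        have e2 := hg0 m
        simp [hmk] at e e1 e2 ⊢
        omega
      · exact hfk m hm
    rw [← hfl, hfe]
  funext v
  rw [tm_eq_sum, tm_eq_sum a l']
  simp only [key]

/-! ### Length equals the number of inversions -/

variable (C) in
/-- The number of inversions of the morphism `id^a σ_{i_1} ⋯ σ_{i_k}`. -/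
noncomputable def ninv (a : A) (l : List I) : ℕ := (C.inv Set.univ a l).ncard

theorem ninv_congr {a : A} {l l' : List I} (h : C.Eqv a l l') : C.ninv a l = C.ninv a l' := by
  rw [ninv, inv_congr h, ninv]

theorem ninv_snoc_of_nonneg (hC : C.IsFRS) {i : I} {a : A} {l : List I}
    (h : 0 ≤ C.tm a l (sr i)) : C.ninv a (l ++ [i]) = C.ninv a l + 1 :=
  ncard_inv_snoc_of_nonneg hC (Set.mem_univ i) h

theorem ninv_snoc_of_nonpos (hC : C.IsFRS) {i : I} {a : A} {l : List I}
    (h : C.tm a l (sr i) ≤ 0) : C.ninv a l = C.ninv a (l ++ [i]) + 1 :=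
  ncard_inv_snoc_of_nonpos hC (Set.mem_univ i) h

theorem tm_sr_cases (hC : C.IsFRS) (a : A) (l : List I) (i : I) :
    0 ≤ C.tm a l (sr i) ∨ C.tm a l (sr i) ≤ 0 :=
  root_pos_or_neg hC (tm_mem_roots (sr_mem_roots _ i))

theorem ninv_nil (a : A) : C.ninv a [] = 0 := by simp [ninv, inv_nil]

theorem ninv_le_length (hC : C.IsFRS) (a : A) (l : List I) : C.ninv a l ≤ l.length := by
  induction l using List.reverseRecOn with
  | nil => simp [ninv_nil]
  | append_singleton l i ih =>
    rw [List.length_append, List.length_singleton]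
    rcases tm_sr_cases hC a l i with h | h
    · rw [ninv_snoc_of_nonneg hC h]; omega
    · have := ninv_snoc_of_nonpos hC h; omega

/-- If a word `l` has as many inversions as letters and the morphism `w` that it defines makes
`α_i` negative, then `w σ_i` is defined by a word with one letter less. Let `j ≠ i` be the last
letter of `l`. Then `w` makes all positive roots in the span of `α_i`, `α_j` negative, so by
induction a longest alternating word `σ_j σ_i ⋯` can be stripped off letter by letter, and the
braid relation replaces it by one that starts with `i`. -/
theorem exists_shorter (hC : C.IsFRS) (a : A) (n : ℕ) (l : List I) (hn : l.length = n)
    (hl : C.ninv a l = l.length) (i : I) (hi : C.tm a l (sr i) ≤ 0) :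
    ∃ l', l'.length + 1 = l.length ∧ C.Eqv a l' (l ++ [i]) := by
  induction n using Nat.strong_induction_on generalizing l i with
  | _ n ih =>
  rcases List.eq_nil_or_concat' l with rfl | ⟨l₀, j, rfl⟩
  · exact absurd hi (not_nonpos_of_nonneg (sr_mem_roots (C := C) a i) (sr_nonneg i))
  by_cases hji : j = i
  · subst hji
    exact ⟨l₀, by simp, (eqv_cancel a l₀ [j]).symm⟩
  have hlen : (l₀ ++ [j]).length = l₀.length + 1 := by simp
  have hb := ninv_le_length hC a l₀
  have hj0 : 0 ≤ C.tm a l₀ (sr j) := by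
    rcases tm_sr_cases hC a l₀ j with h | h
    · exact h
    · have := ninv_snoc_of_nonpos hC h
      omega
  have hl₀ : C.ninv a l₀ = l₀.length := by
    have := ninv_snoc_of_nonneg hC hj0
    omega
  have hj : C.tm a (l₀ ++ [j]) (sr j) ≤ 0 := by
    rw [tm_snoc_sr]; exact neg_nonpos.2 hj0
  set l := l₀ ++ [j] with hldef
  set b := C.bk a l with hbdef
  have strip : ∀ t, 1 ≤ t → t ≤ C.rk j i b → ∃ l', l'.length + t = l.length ∧
      C.Eqv a l' (l ++ alt j i t) ∧ C.ninv a l' = l'.length := by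
    intro t ht
    induction t, ht using Nat.le_induction with
    | base => exact fun _ => ⟨l₀, hlen.symm, (eqv_cancel a l₀ [j]).symm, hl₀⟩
    | succ t ht iht =>
      intro htm
      obtain ⟨l₁, h1, h2, h3⟩ := iht (by omega)
      have hneg : C.tm a l₁ (sr (altLetter j i t)) ≤ 0 := by
        rw [h2.2, tm_append]
        refine tm_nonpos (J := {j, i}) ?_
          (alt_nonneg hC (show t < C.rk j i b by omega)) fun k hk => ?_
        · rintro k (rfl | rfl) <;> assumption
        · rw [tm_apply_of_notMem (alt_mem j i t) _ hk]
          have : k ≠ altLetter j i t := by rintro rfl; exact hk (altLetter_mem j i t)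
          simp [this]
      obtain ⟨l', h4, h5⟩ := ih l₁.length (by omega) l₁ rfl h3 _ hneg
      refine ⟨l', by omega, ?_, ?_⟩
      · have := h5.trans (h2.append [altLetter j i t])
        rwa [List.append_assoc, ← alt_succ] at this
      · have e1 := ninv_snoc_of_nonpos hC hneg
        have e2 := ninv_congr h5
        omega
  have hpos := rk_pos hC j i b
  obtain ⟨l', h1, h2, -⟩ := strip (C.rk j i b) hpos le_rfl
  have h3 : C.Eqv a l' (l ++ alt i j (C.rk j i b)) := h2.trans (eqv_alt hC hji b).prepend
  obtain ⟨m, hm⟩ := Nat.exists_eq_succ_of_ne_zero hpos.ne'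
  rw [hm] at h1 h3
  have h4 : l ++ alt i j (m + 1) = l ++ [i] ++ alt j i m := by simp [alt]
  rw [h4] at h3
  refine ⟨l' ++ (alt j i m).reverse, ?_, (h3.append _).trans (eqv_cancel a _ _)⟩
  rw [List.length_append, List.length_reverse, alt_length]
  omega

/-- Every morphism is defined by a word with as many letters as the morphism has inversions. -/
theorem exists_reduced (hC : C.IsFRS) (a : A) (l : List I) :
    ∃ l', C.Eqv a l' l ∧ l'.length = C.ninv a l := by
  induction l using List.reverseRecOn with
  | nil => exact ⟨[], ⟨rfl, rfl⟩, by simp [ninv_nil]⟩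
  | append_singleton l i ih =>
    obtain ⟨l', h1, h2⟩ := ih
    rcases tm_sr_cases hC a l i with h | h
    · exact ⟨l' ++ [i], h1.append _, by simp [ninv_snoc_of_nonneg hC h, h2]⟩
    · have h3 := ninv_snoc_of_nonpos hC h
      obtain ⟨l'', h4, h5⟩ := exists_shorter hC a _ l' rfl (by rw [ninv_congr h1, h2]) i
        (by rw [h1.2]; exact h)
      exact ⟨l'', h5.trans (h1.append _), by omega⟩

variable (C) in
/-- The morphism `id^a σ_{i_1} ⋯ σ_{i_k}`. -/
def wordMor (a : A) (l : List I) : Mor C :=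
  ⟨C.bk a l, a, C.tm a l, ⟨l, wordTarget_bk a l, wordMap_bk a l⟩⟩

theorem wordMor_eq_of_eqv {a : A} {l l' : List I} (h : C.Eqv a l l') :
    C.wordMor a l = C.wordMor a l' := by
  simp only [wordMor, h.1, h.2]

theorem realizes_iff {w : Mor C} {l : List I} : Realizes w l ↔ w = C.wordMor w.tgt l := by
  constructor
  · rintro ⟨h1, h2⟩
    ext1
    · simp only [wordMor]; rw [← h1, bk_wordTarget]
    · rfl
    · simp only [wordMor]; rw [← h1, ← wordMap_eq_tm, h2]
  · intro h
    rw [h]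
    exact ⟨wordTarget_bk _ _, wordMap_bk _ _⟩

theorem exists_eq_wordMor (w : Mor C) : ∃ l, w = C.wordMor w.tgt l := by
  obtain ⟨l, hl⟩ := w.spec
  exact ⟨l, realizes_iff.1 hl⟩

theorem len_wordMor (hC : C.IsFRS) (a : A) (l : List I) : len (C.wordMor a l) = C.ninv a l := by
  obtain ⟨l', h1, h2⟩ := exists_reduced hC a l
  apply le_antisymm
  · refine Nat.sInf_le ⟨l', ?_, h2⟩
    rw [realizes_iff]
    exact (wordMor_eq_of_eqv h1).symm
  · refine le_csInf ⟨_, l', ?_, h2⟩ ?_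
    · rw [realizes_iff]; exact (wordMor_eq_of_eqv h1).symm
    · rintro k ⟨l'', h3, rfl⟩
      rw [realizes_iff] at h3
      have h4 : C.Eqv a l l'' := by
        simp only [wordMor, Mor.mk.injEq] at h3
        exact ⟨h3.1, h3.2.2⟩
      rw [ninv_congr h4]
      exact ninv_le_length hC a l''

theorem exists_eq_wordMor_reduced (hC : C.IsFRS) (w : Mor C) :
    ∃ l, w = C.wordMor w.tgt l ∧ l.length = len w := by
  obtain ⟨l, hl⟩ := exists_eq_wordMor w
  obtain ⟨l', h1, h2⟩ := exists_reduced hC w.tgt l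
  refine ⟨l', hl.trans (wordMor_eq_of_eqv h1).symm, ?_⟩
  rw [h2, ← len_wordMor hC, ← hl]

theorem wordMor_comp_wordMor (a : A) (l l' : List I) :
    (C.wordMor a l).comp (C.wordMor (C.bk a l) l') = C.wordMor a (l ++ l') := by
  simp [Mor.comp, wordMor, bk_append, tm_append]

theorem ninv_append_le (hC : C.IsFRS) (a : A) (l l' : List I) :
    C.ninv a (l ++ l') ≤ C.ninv a l + C.ninv (C.bk a l) l' := by
  obtain ⟨x, h1, h2⟩ := exists_reduced hC a l
  obtain ⟨y, h3, h4⟩ := exists_reduced hC (C.bk a l) l'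
  have h5 : C.Eqv a (x ++ y) (l ++ l') := (h1.append y).trans h3.prepend
  rw [← ninv_congr h5, ← h2, ← h4, ← List.length_append]
  exact ninv_le_length hC a _

/-! ### The weak order and its maximal chains -/

theorem weakLe_wordMor_iff (hC : C.IsFRS) {a : A} {l : List I} {w : Mor C} :
    weakLe (C.wordMor a l) w ↔
      ∃ l', w = C.wordMor a (l ++ l') ∧ C.ninv a (l ++ l') = C.ninv a l + C.ninv (C.bk a l) l' := by
  constructor
  · rintro ⟨v, h1, h2, h3⟩
    obtain ⟨l', hl'⟩ := exists_eq_wordMor v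
    have h1 : v.tgt = C.bk a l := h1
    rw [h1] at hl'
    subst hl'
    rw [wordMor_comp_wordMor] at h2
    subst h2
    rw [len_wordMor hC, len_wordMor hC, len_wordMor hC] at h3
    exact ⟨l', rfl, h3⟩
  · rintro ⟨l', rfl, h⟩
    exact ⟨C.wordMor (C.bk a l) l', rfl, (wordMor_comp_wordMor a l l').symm,
      by simp only [len_wordMor hC, h]⟩

theorem weakLe_trans (hC : C.IsFRS) {u v w : Mor C} (h1 : weakLe u v) (h2 : weakLe v w) :
    weakLe u w := by
  obtain ⟨l, hl⟩ := exists_eq_wordMor u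
  rw [hl] at h1 ⊢
  obtain ⟨x, rfl, h3⟩ := (weakLe_wordMor_iff hC).1 h1
  obtain ⟨y, rfl, h4⟩ := (weakLe_wordMor_iff hC).1 h2
  refine (weakLe_wordMor_iff hC).2 ⟨x ++ y, by rw [List.append_assoc], ?_⟩
  rw [List.append_assoc, bk_append] at h4
  have h5 := ninv_append_le hC (C.bk u.tgt l) x y
  have h6 := ninv_append_le hC u.tgt l (x ++ y)
  omega

theorem len_le_of_weakLe {u w : Mor C} (h : weakLe u w) : len u ≤ len w := by
  obtain ⟨v, -, -, h⟩ := h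
  omega

theorem weakLe_refl (hC : C.IsFRS) (u : Mor C) : weakLe u u := by
  obtain ⟨l, hl⟩ := exists_eq_wordMor u
  rw [hl]
  exact (weakLe_wordMor_iff hC).2 ⟨[], by simp, by simp [ninv_nil]⟩

theorem eq_of_weakLe_of_len_eq (hC : C.IsFRS) {u w : Mor C} (h : weakLe u w)
    (hlen : len u = len w) : u = w := by
  obtain ⟨l, hl⟩ := exists_eq_wordMor u
  rw [hl] at h hlen ⊢
  obtain ⟨x, rfl, h3⟩ := (weakLe_wordMor_iff hC).1 h
  rw [len_wordMor hC, len_wordMor hC] at hlen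
  obtain ⟨y, h4, h5⟩ := exists_reduced hC (C.bk u.tgt l) x
  have hy : y = [] := List.eq_nil_of_length_eq_zero (by omega)
  subst hy
  have := wordMor_eq_of_eqv (h4.prepend (x := l))
  simpa using this

theorem len_le_card (hC : C.IsFRS) {a : A} {w : Mor C} (hw : w.tgt = a) :
    len w ≤ (C.posRoots a).ncard := by
  subst hw
  obtain ⟨l, hl⟩ := exists_eq_wordMor w
  rw [hl, len_wordMor hC, ninv, ← posJ_univ, ← hl, ← ncard_posJ_bk hC (l := l) (by simp)]
  exact Set.ncard_le_ncard (inv_subset _ _ _) (posJ_finite hC _ _)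

/-- Below the maximal length `|R^a_+|` some simple reflection increases the length. -/
theorem exists_cover (hC : C.IsFRS) {u : Mor C} (hu : len u < (C.posRoots u.tgt).ncard) :
    ∃ x : Mor C, x.tgt = u.tgt ∧ weakLe u x ∧ len x = len u + 1 := by
  obtain ⟨l, hl⟩ := exists_eq_wordMor u
  have hlen : len u = C.ninv u.tgt l := by rw [← len_wordMor hC, ← hl]
  have : ∃ i, 0 ≤ C.tm u.tgt l (sr i) := by
    by_contra hno
    push Not at hno
    have h1 : ∀ k ∈ Set.univ, C.tm u.tgt l (sr k) ≤ 0 := fun k _ =>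
      (tm_sr_cases hC u.tgt l k).resolve_left (hno k)
    rw [hlen, ninv, inv_eq_posJ h1, ncard_posJ_bk hC (by simp), posJ_univ] at hu
    exact lt_irrefl _ hu
  obtain ⟨i, hi⟩ := this
  have h1 := ninv_snoc_of_nonneg hC hi
  have h2 : C.ninv (C.bk u.tgt l) [i] = 1 := by
    have := ninv_snoc_of_nonneg (C := C) hC (i := i) (a := C.bk u.tgt l) (l := []) (sr_nonneg i)
    simpa [ninv_nil] using this
  refine ⟨C.wordMor u.tgt (l ++ [i]), rfl, ?_, ?_⟩
  · have := (weakLe_wordMor_iff hC).2 ⟨[i], rfl, by rw [h1, h2]⟩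
    rwa [← hl] at this
  · rw [len_wordMor hC, h1, hlen]

/-- If `u < w` then some element of length `ℓ(u) + 1` lies between them. -/
theorem exists_between (hC : C.IsFRS) {u w : Mor C} (h : weakLe u w) (hlt : len u < len w) :
    ∃ x : Mor C, x.tgt = u.tgt ∧ weakLe u x ∧ weakLe x w ∧ len x = len u + 1 := by
  obtain ⟨l, hl⟩ := exists_eq_wordMor u
  have hlen : len u = C.ninv u.tgt l := by rw [← len_wordMor hC, ← hl]
  rw [hl] at h
  obtain ⟨y, hw, h3⟩ := (weakLe_wordMor_iff hC).1 h
  obtain ⟨z, h4, h5⟩ := exists_reduced hC (C.bk u.tgt l) y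
  have h6 := ninv_congr (h4.prepend (x := l))
  rw [← wordMor_eq_of_eqv (h4.prepend (x := l))] at hw
  cases z with
  | nil =>
    rw [hw, len_wordMor hC, h6, hlen] at hlt
    simp only [List.length_nil] at h5
    omega
  | cons i z =>
    -- the first letter of a reduced word for the quotient gives the intermediate element
    have e : l ++ i :: z = (l ++ [i]) ++ z := by simp
    have b1 := ninv_append_le hC u.tgt l [i]
    have b2 := ninv_append_le hC u.tgt (l ++ [i]) z
    have b3 := ninv_le_length hC (C.bk u.tgt l) [i]
    have b4 := ninv_le_length hC (C.bk u.tgt (l ++ [i])) z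
    rw [← e] at b2
    simp only [List.length_cons, List.length_nil] at b3 h5
    refine ⟨C.wordMor u.tgt (l ++ [i]), rfl, ?_, ?_, ?_⟩
    · have := (weakLe_wordMor_iff hC).2 ⟨[i], rfl,
        (by omega : C.ninv u.tgt (l ++ [i]) = C.ninv u.tgt l + C.ninv (C.bk u.tgt l) [i])⟩
      rwa [← hl] at this
    · refine (weakLe_wordMor_iff hC).2 ⟨z, by rw [hw, e], ?_⟩
      rw [← e]
      omega
    · rw [len_wordMor hC]
      omega

theorem wordMor_nil_weakLe (hC : C.IsFRS) (w : Mor C) : weakLe (C.wordMor w.tgt []) w := by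
  obtain ⟨l, hl⟩ := exists_eq_wordMor w
  exact (weakLe_wordMor_iff hC).2 ⟨l, by simpa using hl, by simp [ninv_nil, bk]⟩

end CartanScheme

/-- All maximal chains in `(Hom(-,a), ≤_R)` have the same length `|R^a_+|`,
i.e. a maximal chain has `|R^a_+| + 1` elements. -/
theorem maximal_chain_length (C : CartanScheme I A) (hC : C.IsFRS) (a : A)
    (S : Set (Mor C)) (hS : S ⊆ {w : Mor C | w.tgt = a}) (hchain : IsChain weakLe S)
    (hmax : ∀ T : Set (Mor C), S ⊆ T → T ⊆ {w : Mor C | w.tgt = a} →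
      IsChain weakLe T → T = S) :
    S.ncard = (C.posRoots a).ncard + 1 := by
  -- adding an element comparable to all of `S` does not enlarge `S`
  have hins : ∀ x : Mor C, x.tgt = a → (∀ w ∈ S, weakLe x w ∨ weakLe w x) → x ∈ S := by
    intro x hx hcomp
    have := hmax (insert x S) (Set.subset_insert _ _) (Set.insert_subset hx hS)
      (hchain.insert fun w hw _ => hcomp w hw)
    rw [← this]
    exact Set.mem_insert _ _
  have hcmp : ∀ u ∈ S, ∀ w ∈ S, len u ≤ len w → weakLe u w := by
    intro u hu w hw hle
    by_cases hne : u = w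
    · rw [hne]; exact weakLe_refl hC w
    rcases hchain hu hw hne with h | h
    · exact h
    · have := eq_of_weakLe_of_len_eq hC h (le_antisymm (len_le_of_weakLe h) hle)
      exact absurd this.symm hne
  have hinj : Set.InjOn len S := fun u hu w hw h =>
    eq_of_weakLe_of_len_eq hC (hcmp u hu w hw h.le) h
  have hlev : ∀ k ≤ (C.posRoots a).ncard, ∃ u ∈ S, len u = k := by
    intro k
    induction k with
    | zero =>
      refine fun _ => ⟨C.wordMor a [], hins _ rfl fun w hw => Or.inl ?_, ?_⟩
      · have hwa : w.tgt = a := hS hw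
        rw [← hwa]
        exact wordMor_nil_weakLe hC w
      · rw [len_wordMor hC, ninv_nil]
    | succ k ih =>
      intro hk
      obtain ⟨u, hu, hlen⟩ := ih (by omega)
      have hua : u.tgt = a := hS hu
      have hx : ∃ x : Mor C, x.tgt = u.tgt ∧ weakLe u x ∧ len x = len u + 1 ∧
          ∀ w ∈ S, len u < len w → weakLe x w := by
        by_cases hex : ∃ w ∈ S, len u < len w
        · -- interpolate below the next element of the chain
          obtain ⟨w, ⟨hw, hlt⟩, hmin⟩ :=
            WellFounded.has_min (measure (len (C := C))).wf {w | w ∈ S ∧ len u < len w} hex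
          obtain ⟨x, h1, h2, h3, h4⟩ := exists_between hC (hcmp u hu w hw hlt.le) hlt
          exact ⟨x, h1, h2, h4, fun w' hw' hlt' =>
            weakLe_trans hC h3 (hcmp w hw w' hw' (not_lt.1 (hmin w' ⟨hw', hlt'⟩)))⟩
        · obtain ⟨x, h1, h2, h3⟩ := exists_cover hC (u := u) (by rw [hua]; omega)
          exact ⟨x, h1, h2, h3, fun w hw hlt => absurd ⟨w, hw, hlt⟩ hex⟩
      obtain ⟨x, h1, h2, h3, h4⟩ := hx
      refine ⟨x, hins x (h1.trans hua) fun w hw => ?_, by omega⟩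
      by_cases hlt : len u < len w
      · exact Or.inl (h4 w hw hlt)
      · exact Or.inr (weakLe_trans hC (hcmp w hw u hu (not_lt.1 hlt)) h2)
  have himg : len '' S = Set.Iic (C.posRoots a).ncard := by
    ext k
    constructor
    · rintro ⟨u, hu, rfl⟩
      exact len_le_card hC (hS hu)
    · exact fun hk => hlev k hk
  rw [← hinj.ncard_image, himg, ← Finset.coe_Iic, Set.ncard_coe_finset, Nat.card_Iic]
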